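/- For every x and r > 0 such that the closed ball B̄_x(r') ⊆ Ω for all r' in a neighborhood of r, the function r ↦ D_φ(x,r) is differentiable at r and ∂_r D_φ(x,r) = (2/r) D_φ(x,r) + (2/r²) E_φ(x,r). -/

import Mathlib

open Metric MeasureTheory
open scoped RealInnerProductSpace

noncomputable section

abbrev E4 := EuclideanSpace ℝ (Fin 4)

variable {E : Type*} [NormedAddCommGroup E] [InnerProductSpace ℝ E] [FiniteDimensional ℝ E]

/-- `u` is smooth and harmonic (the Laplacian, i.e. the sum of the pure second
derivatives in the coordinate directions, vanishes) on `Ω`. -/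
def IsHarmonicOn (u : E4 → E) (Ω : Set E4) : Prop :=
  ContDiffOn ℝ (⊤ : ℕ∞) u Ω ∧
  ∀ x ∈ Ω, ∑ i : Fin 4,
    iteratedFDeriv ℝ 2 u x ![EuclideanSpace.single i (1:ℝ), EuclideanSpace.single i 1] = 0

/-- `|∇u(y)|²`, the squared Frobenius norm of the derivative of `u` at `y`. -/
def gradSq (u : E4 → E) (y : E4) : ℝ :=
  ∑ i : Fin 4, ‖fderiv ℝ u y (EuclideanSpace.single i (1:ℝ))‖ ^ 2

/-- `D_φ(x,r) = ∫ |∇u(y)|² φ(|y−x|/r) dy`. -/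
def Dphi (φ : ℝ → ℝ) (u : E4 → E) (x : E4) (r : ℝ) : ℝ :=
  ∫ y, gradSq u y * φ (‖y - x‖ / r)

/-- `H_φ(x,r) = −∫ |u(y)|² |y−x|⁻¹ φ'(|y−x|/r) dy`. -/
def Hphi (φ : ℝ → ℝ) (u : E4 → E) (x : E4) (r : ℝ) : ℝ :=
  -∫ y, ‖u y‖ ^ 2 * ‖y - x‖⁻¹ * deriv φ (‖y - x‖ / r)

/-- `E_φ(x,r) = −∫ |∂_{ν_x}u(y)|² |y−x| φ'(|y−x|/r) dy`, where `ν_x(y) = (y−x)/|y−x|`. -/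
def Ephi (φ : ℝ → ℝ) (u : E4 → E) (x : E4) (r : ℝ) : ℝ :=
  -∫ y, ‖fderiv ℝ u y (‖y - x‖⁻¹ • (y - x))‖ ^ 2 * ‖y - x‖ * deriv φ (‖y - x‖ / r)

/-- The smoothed frequency `N_φ(x,r) = r D_φ(x,r) / H_φ(x,r)`. -/
def Nphi (φ : ℝ → ℝ) (u : E4 → E) (x : E4) (r : ℝ) : ℝ :=
  r * Dphi φ u x r / Hphi φ u x r

/-!
The Pohozaev field `X = |∇u|² η - 2 ∑ᵢ ⟪∂_η u, ∂ᵢ u⟫ eᵢ`, with `η = y - x`, of a harmonic function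
in dimension `n` has divergence `(n - 2) |∇u|²`, because its second-derivative terms cancel by
symmetry and the remaining one is `⟪∂_η u, Δu⟫ = 0`. Integrating this divergence against the cutoff
`w = φ(|y - x| / r)` gives
`(n - 2) ∫ |∇u|² w + ∫ |∇u|² ∂_η w = 2 ∫ ⟪∂_η u, ∂_{∇w} u⟫`.
Since `w` scales with `r`, we have `∂_r w = -r⁻¹ ∂_η w`, so the second integral is `-r ∂_r D`; and
since `∇w` is radial, the right-hand side is `-(2 / r) E`.
-/

open InnerProductSpace Module Topology
open scoped ContDiff Gradient Laplacian

theorem exists_gt_closedBall_subset {W : Type*} [NormedAddCommGroup W] [NormedSpace ℝ W]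
    [ProperSpace W] {U : Set W} {x : W} {r : ℝ} (hr : 0 ≤ r) (hU : IsOpen U)
    (h : closedBall x r ⊆ U) : ∃ R > r, closedBall x R ⊆ U := by
  obtain ⟨δ, hδ, hδU⟩ := (isCompact_closedBall x r).exists_cthickening_subset_open hU h
  exact ⟨δ + r, lt_add_of_pos_left r hδ, by rwa [← cthickening_closedBall hδ.le hr]⟩

theorem isOpen_setOf_contDiffAt {𝕜 W G : Type*} [NontriviallyNormedField 𝕜]
    [NormedAddCommGroup W] [NormedSpace 𝕜 W] [NormedAddCommGroup G] [NormedSpace 𝕜 G]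
    {n : WithTop ℕ∞} (hn : n ≠ ∞) (f : W → G) : IsOpen {y | ContDiffAt 𝕜 n f y} :=
  isOpen_iff_mem_nhds.2 fun _ (hy : ContDiffAt 𝕜 n f _) ↦ hy.eventually hn

theorem deriv_eq_zero_of_eqOn_const {𝕜 G : Type*} [NontriviallyNormedField 𝕜]
    [NormedAddCommGroup G] [NormedSpace 𝕜 G] {f : 𝕜 → G} {s : Set 𝕜} {t : 𝕜} {c : G}
    (hs : s ∈ 𝓝 t) (hf : Set.EqOn f (fun _ ↦ c) s) : deriv f t = 0 := by
  rw [(hf.eventuallyEq_of_mem hs).deriv_eq, deriv_const]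

section IntegrationByParts

theorem integrable_of_continuousOn_of_support_subset {X G : Type*} [TopologicalSpace X]
    [MeasurableSpace X] [OpensMeasurableSpace X] [T2Space X] [NormedAddCommGroup G]
    {μ : Measure X} [IsFiniteMeasureOnCompacts μ]
    {f : X → G} {K : Set X} (hK : IsCompact K) (hf : ContinuousOn f K)
    (hsupp : Function.support f ⊆ K) : Integrable f μ :=
  (integrableOn_iff_integrable_of_support_subset hsupp).1 (hf.integrableOn_compact hK)

variable {W : Type*} [NormedAddCommGroup W] [NormedSpace ℝ W] [MeasurableSpace W] [BorelSpace W]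
  {μ : Measure W} {w : W → ℝ}

theorem integrable_mul_fderiv_of_hasCompactSupport [IsFiniteMeasureOnCompacts μ]
    (hw : Continuous w) (hwc : HasCompactSupport w) {f : W → ℝ}
    (hf : ∀ y ∈ tsupport w, ContDiffAt ℝ 1 f y) (v : W) :
    Integrable (fun y ↦ w y * fderiv ℝ f y v) μ := by
  have hDf : ContinuousOn (fun y ↦ fderiv ℝ f y v) (tsupport w) := fun y hy ↦
    (((hf y hy).fderiv_right (m := 0) (by simp)).clm_apply
      contDiffAt_const).continuousAt.continuousWithinAt
  exact integrable_of_continuousOn_of_support_subset hwc (hw.continuousOn.mul hDf)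
    ((Function.support_mul_subset_left _ _).trans (subset_tsupport w))

theorem integrable_fderiv_mul_of_hasCompactSupport [IsFiniteMeasureOnCompacts μ]
    (hw : ContDiff ℝ 1 w) (hwc : HasCompactSupport w) {f : W → ℝ}
    (hf : ContinuousOn f (tsupport w)) (v : W) :
    Integrable (fun y ↦ fderiv ℝ w y v * f y) μ := by
  have hDw : Continuous fun y ↦ fderiv ℝ w y v :=
    (hw.continuous_fderiv one_ne_zero).clm_apply continuous_const
  exact integrable_of_continuousOn_of_support_subset hwc (hDw.continuousOn.mul hf)
    ((Function.support_mul_subset_left _ _).trans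
      ((subset_tsupport _).trans (tsupport_fderiv_apply_subset ℝ v)))

variable [FiniteDimensional ℝ W] [μ.IsAddHaarMeasure]

theorem integral_mul_sum_fderiv_eq_neg {ι : Type*} [Fintype ι] (hw : ContDiff ℝ 1 w)
    (hwc : HasCompactSupport w) {X : ι → W → ℝ}
    (hX : ∀ i, ∀ y ∈ tsupport w, ContDiffAt ℝ 1 (X i) y) (e : ι → W) :
    ∫ y, w y * ∑ i, fderiv ℝ (X i) y (e i) ∂μ = -∫ y, ∑ i, fderiv ℝ w y (e i) * X i y ∂μ := by
  have hXc (i : ι) : ContinuousOn (X i) (tsupport w) := fun y hy ↦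
    (hX i y hy).continuousAt.continuousWithinAt
  have hwDX (i : ι) := integrable_mul_fderiv_of_hasCompactSupport (μ := μ) hw.continuous hwc
    (hX i) (e i)
  have hDwX (i : ι) := integrable_fderiv_mul_of_hasCompactSupport (μ := μ) hw hwc (hXc i) (e i)
  have hwX (i : ι) : Integrable (fun y ↦ w y * X i y) μ :=
    integrable_of_continuousOn_of_support_subset hwc (hw.continuous.continuousOn.mul (hXc i))
      ((Function.support_mul_subset_left _ _).trans (subset_tsupport w))
  simp only [Finset.mul_sum]
  rw [integral_finsetSum _ fun i _ ↦ hwDX i, integral_finsetSum _ fun i _ ↦ hDwX i,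
    ← Finset.sum_neg_distrib]
  exact Finset.sum_congr rfl fun i _ ↦
    integral_mul_fderiv_eq_neg_fderiv_mul_of_integrable (hDwX i) (hwDX i) (hwX i)
      (fun y _ ↦ hw.differentiable one_ne_zero y)
      (fun y hy ↦ (hX i y hy).differentiableAt one_ne_zero)

end IntegrationByParts

section RadialCutoff

/-- The radial function obtained by rescaling the profile `φ` to the radius `r` around `x`. -/
def radialCutoff {W : Type*} [NormedAddCommGroup W] (φ : ℝ → ℝ) (x : W) (r : ℝ) (y : W) : ℝ :=
  φ (‖y - x‖ / r)

variable {φ : ℝ → ℝ}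

section Gradient

variable {W : Type*} [NormedAddCommGroup W] [InnerProductSpace ℝ W] [CompleteSpace W]

theorem hasGradientAt_radialCutoff (hφ : Differentiable ℝ φ) (hφ' : deriv φ 0 = 0) (x : W) (r : ℝ)
    (y : W) :
    HasGradientAt (radialCutoff φ x r)
      ((deriv φ (‖y - x‖ / r) / r) • (‖y - x‖⁻¹ • (y - x))) y := by
  rcases eq_or_ne y x with rfl | hyx
  · -- At the centre the stated gradient is `0`, and `φ` is constant to first order.
    have hφ_o : (fun t ↦ φ t - φ 0) =o[𝓝 0] fun t ↦ t := by
      simpa [hφ'] using (hφ 0).hasDerivAt.isLittleO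
    have hnorm : Filter.Tendsto (fun z ↦ ‖z - y‖ / r) (𝓝 y) (𝓝 0) := by
      simpa using ((tendsto_sub_nhds_zero_iff.2 (Filter.tendsto_id (x := 𝓝 y))).norm.div_const r)
    have hO : (fun z ↦ ‖z - y‖ / r) =O[𝓝 y] fun z ↦ z - y := by
      simpa only [div_eq_inv_mul] using
        (Asymptotics.isBigO_refl (fun z ↦ z - y) (𝓝 y)).norm_left.const_mul_left r⁻¹
    rw [hasGradientAt_iff_isLittleO]
    simpa [radialCutoff, Function.comp_def] using (hφ_o.comp_tendsto hnorm).trans_isBigO hO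
  · have hsub : y - x ≠ 0 := sub_ne_zero.2 hyx
    have hnorm := (((hasFDerivAt_id y).sub_const x).norm_sq).sqrt (by simpa using hsub)
    simp only [id, Real.sqrt_sq (norm_nonneg _)] at hnorm
    have hcomp : HasFDerivAt (radialCutoff φ x r) _ y :=
      (hφ (‖y - x‖ / r)).hasDerivAt.comp_hasFDerivAt y (hnorm.mul_const r⁻¹)
    rw [hasGradientAt_iff_hasFDerivAt]
    refine hcomp.congr_fderiv ?_
    ext z
    simp
    ring

theorem gradient_radialCutoff (hφ : Differentiable ℝ φ) (hφ' : deriv φ 0 = 0) (x : W) (r : ℝ)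
    (y : W) :
    ∇ (radialCutoff φ x r) y = (deriv φ (‖y - x‖ / r) / r) • (‖y - x‖⁻¹ • (y - x)) :=
  (hasGradientAt_radialCutoff hφ hφ' x r y).gradient

theorem contDiff_radialCutoff (hφ : ContDiff ℝ 1 φ) (hφ' : deriv φ 0 = 0) (x : W) (r : ℝ) :
    ContDiff ℝ 1 (radialCutoff φ x r) := by
  have hdφ : Differentiable ℝ φ := hφ.differentiable one_ne_zero
  have hψ : Continuous fun y : W ↦ deriv φ (‖y - x‖ / r) / r :=
    ((hφ.continuous_deriv le_rfl).comp
      ((continuous_id.sub continuous_const).norm.div_const r)).div_const r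
  have hgrad : Continuous (∇ (radialCutoff φ x r)) := by
    refine continuous_iff_continuousAt.2 fun y ↦ ?_
    simp only [ContinuousAt, funext (gradient_radialCutoff hdφ hφ' x r)]
    rcases eq_or_ne y x with rfl | hyx
    · have hψ0 : Filter.Tendsto (fun z ↦ deriv φ (‖z - y‖ / r) / r) (𝓝 y) (𝓝 0) := by
        simpa [hφ'] using hψ.tendsto y
      have hunit (z : W) : ‖‖z - y‖⁻¹ • (z - y)‖ ≤ 1 := by
        rw [norm_smul, norm_inv, norm_norm]
        exact inv_mul_le_one
      simpa using hψ0.zero_smul_isBoundedUnder_le (Filter.isBoundedUnder_of ⟨1, hunit⟩)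
    · have hsub : ‖y - x‖ ≠ 0 := norm_ne_zero_iff.2 (sub_ne_zero.2 hyx)
      have hη : ContinuousAt (fun z ↦ z - x) y := continuousAt_id.sub continuousAt_const
      exact hψ.continuousAt.smul ((hη.norm.inv₀ hsub).smul hη)
  refine contDiff_one_iff_fderiv.2
    ⟨fun y ↦ (hasGradientAt_radialCutoff hdφ hφ' x r y).differentiableAt, ?_⟩
  rw [← toDual_comp_gradient]
  exact (toDual ℝ W).continuous.comp hgrad

end Gradient

section Derivative

variable {W : Type*} [NormedAddCommGroup W] {x : W} {r R : ℝ}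

theorem radialCutoff_eq_zero (hφ0 : ∀ t, 1 ≤ t → φ t = 0) (hr : 0 < r) {y : W}
    (hy : y ∉ ball x r) : radialCutoff φ x r y = 0 :=
  hφ0 _ ((one_le_div hr).2 (by simpa [dist_eq_norm] using hy))

theorem hasDerivAt_radialCutoff (hφ : Differentiable ℝ φ) (hr : r ≠ 0) (y : W) :
    HasDerivAt (fun t ↦ radialCutoff φ x t y)
      (deriv φ (‖y - x‖ / r) * (-‖y - x‖ / r ^ 2)) r := by
  have hdiv : HasDerivAt (fun t ↦ ‖y - x‖ / t) (-‖y - x‖ / r ^ 2) r := by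
    simpa [div_eq_mul_inv] using (hasDerivAt_inv hr).const_mul ‖y - x‖
  exact (hφ (‖y - x‖ / r)).hasDerivAt.comp r hdiv

variable [MeasurableSpace W] [OpensMeasurableSpace W] {μ : Measure W} {g : W → ℝ}

theorem hasDerivAt_setIntegral_mul_radialCutoff (hφ : ContDiff ℝ 1 φ) (hr : 0 < r)
    (hg : IntegrableOn g (ball x R) μ) :
    HasDerivAt (fun t ↦ ∫ y in ball x R, g y * radialCutoff φ x t y ∂μ)
      (∫ y in ball x R, g y * (deriv φ (‖y - x‖ / r) * (-‖y - x‖ / r ^ 2)) ∂μ) r := by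
  have hdist : Continuous fun y : W ↦ ‖y - x‖ := (continuous_id.sub continuous_const).norm
  have hφ_meas (t : ℝ) : AEStronglyMeasurable (radialCutoff φ x t) (μ.restrict (ball x R)) :=
    (hφ.continuous.comp (hdist.div_const t)).aestronglyMeasurable
  have hφ'_meas : AEStronglyMeasurable
      (fun y ↦ deriv φ (‖y - x‖ / r) * (-‖y - x‖ / r ^ 2)) (μ.restrict (ball x R)) :=
    (((hφ.continuous_deriv le_rfl).comp (hdist.div_const r)).mul
      (hdist.neg.div_const _)).aestronglyMeasurable
  obtain ⟨B, hB⟩ := (isCompact_Icc (a := (0 : ℝ)) (b := R / r)).exists_bound_of_continuousOn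
    hφ.continuous.continuousOn
  obtain ⟨C, hC⟩ := (isCompact_Icc (a := (0 : ℝ)) (b := R / (r / 2))).exists_bound_of_continuousOn
    (hφ.continuous_deriv le_rfl).continuousOn
  have hmem {y : W} (hy : y ∈ ball x R) {s t : ℝ} (hs : 0 < s) (hst : s ≤ t) :
      ‖y - x‖ / t ∈ Set.Icc 0 (R / s) := by
    have hR : ‖y - x‖ ≤ R := (mem_ball_iff_norm.1 hy).le
    exact ⟨div_nonneg (norm_nonneg _) (hs.trans_le hst).le,
      by gcongr; exact (norm_nonneg _).trans hR⟩
  refine (hasDerivAt_integral_of_dominated_loc_of_deriv_le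
    (F' := fun t y ↦ g y * (deriv φ (‖y - x‖ / t) * (-‖y - x‖ / t ^ 2))) (s := Set.Ioi (r / 2))
    (bound := fun y ↦ ‖g y‖ * (C * (R / (r / 2) ^ 2))) (Ioi_mem_nhds (half_lt_self hr))
    (.of_forall fun t ↦ hg.aestronglyMeasurable.mul (hφ_meas t)) ?_
    (hg.aestronglyMeasurable.mul hφ'_meas) ?_ (hg.norm.mul_const _) ?_).2
  · refine hg.mul_bdd (c := B) (hφ_meas r) ?_
    filter_upwards [ae_restrict_mem measurableSet_ball] with y hy
    exact hB _ (hmem hy hr le_rfl)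
  · filter_upwards [ae_restrict_mem measurableSet_ball] with y hy t ht
    have hφ'_le := hC _ (hmem hy (half_pos hr) (Set.mem_Ioi.1 ht).le)
    have hyR : ‖y - x‖ ≤ R := (mem_ball_iff_norm.1 hy).le
    have ht : r / 2 < t := ht
    rw [norm_mul, norm_mul, norm_div, norm_neg, norm_norm, norm_pow,
      Real.norm_of_nonneg (by linarith : 0 ≤ t)]
    gcongr
    · exact (norm_nonneg _).trans hφ'_le
    · exact (norm_nonneg _).trans hyR
  · refine .of_forall fun y t ht ↦ ?_
    have ht : r / 2 < t := ht
    exact (hasDerivAt_radialCutoff (hφ.differentiable one_ne_zero) (by linarith) y).const_mul _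

theorem hasDerivAt_integral_mul_radialCutoff (hφ : ContDiff ℝ 1 φ) (hφ0 : ∀ t, 1 ≤ t → φ t = 0)
    (hr : 0 < r) (hrR : r < R) (hg : IntegrableOn g (ball x R) μ) :
    HasDerivAt (fun t ↦ ∫ y, g y * radialCutoff φ x t y ∂μ)
      (∫ y, g y * (deriv φ (‖y - x‖ / r) * (-‖y - x‖ / r ^ 2)) ∂μ) r := by
  have hD : (fun t ↦ ∫ y, g y * radialCutoff φ x t y ∂μ) =ᶠ[𝓝 r]
      fun t ↦ ∫ y in ball x R, g y * radialCutoff φ x t y ∂μ := by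
    filter_upwards [Ioo_mem_nhds hr hrR] with t ht
    refine (setIntegral_eq_integral_of_forall_compl_eq_zero fun y hy ↦ ?_).symm
    rw [radialCutoff_eq_zero hφ0 ht.1 fun h ↦ hy (ball_subset_ball ht.2.le h), mul_zero]
  have hD' : ∫ y, g y * (deriv φ (‖y - x‖ / r) * (-‖y - x‖ / r ^ 2)) ∂μ =
      ∫ y in ball x R, g y * (deriv φ (‖y - x‖ / r) * (-‖y - x‖ / r ^ 2)) ∂μ := by
    refine (setIntegral_eq_integral_of_forall_compl_eq_zero fun y hy ↦ ?_).symm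
    have hRy : R ≤ ‖y - x‖ := by simpa [dist_eq_norm] using hy
    have hφ' : deriv φ (‖y - x‖ / r) = 0 :=
      deriv_eq_zero_of_eqOn_const (Ici_mem_nhds ((one_lt_div hr).2 (hrR.trans_le hRy))) hφ0
    rw [hφ', zero_mul, mul_zero]
  rw [hD']
  exact (hasDerivAt_setIntegral_mul_radialCutoff hφ hr hg).congr_of_eventuallyEq hD

end Derivative

end RadialCutoff

variable {V F : Type*} [NormedAddCommGroup V] [InnerProductSpace ℝ V] [FiniteDimensional ℝ V]
  [NormedAddCommGroup F] [InnerProductSpace ℝ F]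

section GradNormSq

/-- The squared Frobenius norm `∑ i, ‖A eᵢ‖²` of `A`, computed in an arbitrarily chosen
orthonormal basis; see `frobeniusNormSq_eq_sum` for the independence of the basis. -/
def frobeniusNormSq (A : V →L[ℝ] F) : ℝ :=
  ∑ i, ‖A (stdOrthonormalBasis ℝ V i)‖ ^ 2

/-- The energy density `|∇u(y)|²` of `u` at `y`, for domains of any finite dimension. -/
def gradNormSq (u : V → F) (y : V) : ℝ :=
  frobeniusNormSq (fderiv ℝ u y)

theorem frobeniusNormSq_eq_sum {ι : Type*} [Fintype ι] (b : OrthonormalBasis ι ℝ V)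
    (A : V →L[ℝ] F) : frobeniusNormSq A = ∑ i, ‖A (b i)‖ ^ 2 := by
  -- Apply the form `(v, w) ↦ ⟪A v, A w⟫` to the canonical tensor, which is basis-independent.
  have h := congrArg (TensorProduct.lift ((innerₗ F).compl₁₂ A.toLinearMap A.toLinearMap))
    ((canonicalCovariantTensor_eq_sum V (stdOrthonormalBasis ℝ V)).symm.trans
      (canonicalCovariantTensor_eq_sum V b))
  simpa [frobeniusNormSq] using h

theorem gradSq_eq_gradNormSq (u : E4 → F) : gradSq u = gradNormSq u := by
  ext y
  simp [gradSq, gradNormSq, frobeniusNormSq_eq_sum (EuclideanSpace.basisFun (Fin 4) ℝ)]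

variable {u : V → F} {y : V}

theorem contDiffAt_gradNormSq (hu : ContDiffAt ℝ 2 u y) : ContDiffAt ℝ 1 (gradNormSq u) y := by
  unfold gradNormSq frobeniusNormSq
  exact ContDiffAt.sum fun i _ ↦
    ((hu.fderiv_right (by norm_num)).clm_apply contDiffAt_const).norm_sq ℝ

theorem fderiv_gradNormSq_apply {ι : Type*} [Fintype ι] (b : OrthonormalBasis ι ℝ V)
    (hu : ContDiffAt ℝ 2 u y) (w : V) :
    fderiv ℝ (gradNormSq u) y w =
      2 * ∑ i, ⟪fderiv ℝ u y (b i), fderiv ℝ (fderiv ℝ u) y w (b i)⟫ := by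
  have hDu : HasFDerivAt (fderiv ℝ u) (fderiv ℝ (fderiv ℝ u) y) y :=
    ((hu.fderiv_right (m := 1) (by norm_num)).differentiableAt (by simp)).hasFDerivAt
  have hsum := HasFDerivAt.fun_sum (u := Finset.univ) fun i _ ↦
    (hDu.clm_apply (hasFDerivAt_const (b i) y)).norm_sq
  have heq : gradNormSq u = fun z ↦ ∑ i, ‖fderiv ℝ u z (b i)‖ ^ 2 :=
    funext fun z ↦ frobeniusNormSq_eq_sum b _
  rw [heq, hsum.fderiv]
  simp [Finset.mul_sum]

end GradNormSq

section Pohozaev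

variable {ι : Type*} [Fintype ι] {u : V → F} {x y : V}

/-- The component along `v` of the Pohozaev vector field `|∇u|² η - 2 ∑ i, ⟪∂_η u, ∂ᵢ u⟫ eᵢ`
of `u` centred at `x`, where `η y = y - x`. -/
def pohozaevField (u : V → F) (x v y : V) : ℝ :=
  gradNormSq u y * ⟪v, y - x⟫ - 2 * ⟪fderiv ℝ u y (y - x), fderiv ℝ u y v⟫

theorem contDiffAt_pohozaevField (hu : ContDiffAt ℝ 2 u y) (x v : V) :
    ContDiffAt ℝ 1 (pohozaevField u x v) y := by
  have hη : ContDiffAt ℝ 1 (fun z ↦ z - x) y := contDiffAt_id.sub contDiffAt_const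
  have hDu : ContDiffAt ℝ 1 (fderiv ℝ u) y := hu.fderiv_right (by norm_num)
  exact ((contDiffAt_gradNormSq hu).mul (contDiffAt_const.inner ℝ hη)).sub
    (contDiffAt_const.mul ((hDu.clm_apply hη).inner ℝ (hDu.clm_apply contDiffAt_const)))

theorem fderiv_pohozaevField_apply_self (hu : ContDiffAt ℝ 2 u y) (x v : V) :
    fderiv ℝ (pohozaevField u x v) y v =
      gradNormSq u y * ‖v‖ ^ 2 + fderiv ℝ (gradNormSq u) y (⟪v, y - x⟫ • v)
      - 2 * (‖fderiv ℝ u y v‖ ^ 2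
        + ⟪fderiv ℝ u y v, fderiv ℝ (fderiv ℝ u) y (y - x) v⟫
        + ⟪fderiv ℝ u y (y - x), fderiv ℝ (fderiv ℝ u) y v v⟫) := by
  have hη : HasFDerivAt (fun z ↦ z - x) (ContinuousLinearMap.id ℝ V) y :=
    (hasFDerivAt_id y).sub_const x
  have hDu : HasFDerivAt (fderiv ℝ u) (fderiv ℝ (fderiv ℝ u) y) y :=
    ((hu.fderiv_right (m := 1) (by norm_num)).differentiableAt (by simp)).hasFDerivAt
  have hgrad := ((contDiffAt_gradNormSq hu).differentiableAt (by simp)).hasFDerivAt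
  have hX : HasFDerivAt (pohozaevField u x v) _ y :=
    (hgrad.mul ((hasFDerivAt_const v y).inner ℝ hη)).sub
      (((hDu.clm_apply hη).inner ℝ (hDu.clm_apply (hasFDerivAt_const v y))).const_mul 2)
  have hsymm : fderiv ℝ (fderiv ℝ u) y v (y - x) = fderiv ℝ (fderiv ℝ u) y (y - x) v :=
    hu.isSymmSndFDerivAt (by simp) v (y - x)
  rw [hX.fderiv]
  simp only [sub_apply, add_apply, smul_apply, zero_apply, ContinuousLinearMap.comp_apply,
    ContinuousLinearMap.prod_apply, ContinuousLinearMap.flip_apply, fderivInnerCLM_apply,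
    ContinuousLinearMap.id_apply, map_zero, map_smul, inner_zero_left, inner_add_right,
    real_inner_self_eq_norm_sq, smul_eq_mul, hsymm, real_inner_comm (fderiv ℝ u y v), zero_add,
    add_zero]
  ring

theorem sum_fderiv_pohozaevField (b : OrthonormalBasis ι ℝ V) (hu : ContDiffAt ℝ 2 u y) (x : V) :
    ∑ i, fderiv ℝ (pohozaevField u x (b i)) y (b i) =
      (finrank ℝ V - 2) * gradNormSq u y - 2 * ⟪fderiv ℝ u y (y - x), Δ u y⟫ := by
  have hΔ : Δ u y = ∑ i, fderiv ℝ (fderiv ℝ u) y (b i) (b i) := by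
    simp [laplacian_eq_iteratedFDeriv_orthonormalBasis u b, iteratedFDeriv_two_apply]
  have hnorm : gradNormSq u y = ∑ i, ‖fderiv ℝ u y (b i)‖ ^ 2 := frobeniusNormSq_eq_sum b _
  have hgrad : ∑ i, fderiv ℝ (gradNormSq u) y (⟪b i, y - x⟫ • b i) =
      2 * ∑ i, ⟪fderiv ℝ u y (b i), fderiv ℝ (fderiv ℝ u) y (y - x) (b i)⟫ := by
    rw [← map_sum, b.sum_repr', fderiv_gradNormSq_apply b hu]
  simp only [fderiv_pohozaevField_apply_self hu, b.norm_eq_one, Finset.sum_sub_distrib,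
    Finset.sum_add_distrib, ← Finset.mul_sum, ← inner_sum, ← hΔ, ← hnorm, hgrad, one_pow,
    Finset.sum_const, Finset.card_univ, nsmul_eq_mul, mul_one, finrank_eq_card_basis b.toBasis]
  ring

theorem sum_fderiv_mul_pohozaevField (b : OrthonormalBasis ι ℝ V) (u : V → F) (w : V → ℝ)
    (x y : V) :
    ∑ i, fderiv ℝ w y (b i) * pohozaevField u x (b i) y =
      gradNormSq u y * ⟪∇ w y, y - x⟫ - 2 * ⟪fderiv ℝ u y (y - x), fderiv ℝ u y (∇ w y)⟫ := by
  have hgrad : ∑ i, ⟪∇ w y, b i⟫ • b i = ∇ w y := by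
    simpa only [real_inner_comm] using b.sum_repr' (∇ w y)
  calc ∑ i, fderiv ℝ w y (b i) * pohozaevField u x (b i) y
      = gradNormSq u y * ∑ i, ⟪∇ w y, b i⟫ * ⟪b i, y - x⟫
        - 2 * ⟪fderiv ℝ u y (y - x), fderiv ℝ u y (∑ i, ⟪∇ w y, b i⟫ • b i)⟫ := by
        simp only [pohozaevField, ← inner_gradient_left (𝕜 := ℝ), map_sum, map_smul, inner_sum,
          real_inner_smul_right, Finset.mul_sum, ← Finset.sum_sub_distrib]
        exact Finset.sum_congr rfl fun i _ ↦ by ring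
    _ = _ := by rw [b.sum_inner_mul_inner, hgrad]

end Pohozaev

section WeakPohozaev

variable [MeasurableSpace V] [BorelSpace V] {μ : Measure V} [μ.IsAddHaarMeasure]
  {u : V → F} {w : V → ℝ}

theorem integral_pohozaev_identity (hw : ContDiff ℝ 1 w) (hwc : HasCompactSupport w)
    (hu : HarmonicOnNhd u (tsupport w)) (x : V) :
    (finrank ℝ V - 2) * ∫ y, gradNormSq u y * w y ∂μ + ∫ y, gradNormSq u y * ⟪∇ w y, y - x⟫ ∂μ =
      2 * ∫ y, ⟪fderiv ℝ u y (y - x), fderiv ℝ u y (∇ w y)⟫ ∂μ := by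
  let b := stdOrthonormalBasis ℝ V
  have hX (i) (y : V) (hy : y ∈ tsupport w) : ContDiffAt ℝ 1 (pohozaevField u x (b i)) y :=
    contDiffAt_pohozaevField (hu y hy).1 x (b i)
  have hdiv (y : V) : w y * ∑ i, fderiv ℝ (pohozaevField u x (b i)) y (b i) =
      (finrank ℝ V - 2) * (gradNormSq u y * w y) := by
    by_cases hy : y ∈ tsupport w
    · rw [sum_fderiv_pohozaevField b (hu y hy).1, (hu y hy).2.eq_of_nhds]
      simp only [Pi.zero_apply, inner_zero_right]
      ring
    · simp [image_eq_zero_of_notMem_tsupport hy]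
  have hflux : Integrable (fun y ↦ ∑ i, fderiv ℝ w y (b i) * pohozaevField u x (b i) y) μ :=
    integrable_finsetSum _ fun i _ ↦ integrable_fderiv_mul_of_hasCompactSupport hw hwc
      (fun y hy ↦ (hX i y hy).continuousAt.continuousWithinAt) (b i)
  have hgrad : Integrable (fun y ↦ gradNormSq u y * ⟪∇ w y, y - x⟫) μ := by
    refine integrable_of_continuousOn_of_support_subset hwc (ContinuousOn.mul ?_ ?_) ?_
    · exact fun y hy ↦ (contDiffAt_gradNormSq (hu y hy).1).continuousAt.continuousWithinAt
    · simp only [inner_gradient_left (𝕜 := ℝ)]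
      exact ((hw.continuous_fderiv one_ne_zero).clm_apply
        (continuous_id.sub continuous_const)).continuousOn
    · refine Function.support_subset_iff'.2 fun y hy ↦ ?_
      simp [inner_gradient_left (𝕜 := ℝ), fderiv_of_notMem_tsupport ℝ hy]
  have hibp := integral_mul_sum_fderiv_eq_neg (μ := μ) hw hwc hX b
  have hsplit : 2 * ∫ y, ⟪fderiv ℝ u y (y - x), fderiv ℝ u y (∇ w y)⟫ ∂μ =
      ∫ y, gradNormSq u y * ⟪∇ w y, y - x⟫ ∂μ
        - ∫ y, ∑ i, fderiv ℝ w y (b i) * pohozaevField u x (b i) y ∂μ := by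
    rw [← integral_const_mul, ← integral_sub hgrad hflux]
    simp only [sum_fderiv_mul_pohozaevField, sub_sub_cancel]
  simp only [hdiv, integral_const_mul] at hibp
  linarith

end WeakPohozaev

section SmoothedEnergy

variable [MeasurableSpace V] [BorelSpace V] {φ : ℝ → ℝ} {u : V → F} {x : V} {r : ℝ}

/-- The smoothed Dirichlet energy `D_φ(x,r)` of `u`, for domains of any finite dimension. -/
def smoothedEnergy (φ : ℝ → ℝ) (u : V → F) (x : V) (r : ℝ) : ℝ :=
  ∫ y, gradNormSq u y * radialCutoff φ x r y

/-- The smoothed radial energy `E_φ(x,r)` of `u`, for domains of any finite dimension. -/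
def smoothedRadialEnergy (φ : ℝ → ℝ) (u : V → F) (x : V) (r : ℝ) : ℝ :=
  -∫ y, ‖fderiv ℝ u y (‖y - x‖⁻¹ • (y - x))‖ ^ 2 * ‖y - x‖ * deriv φ (‖y - x‖ / r)

theorem smoothedRadialEnergy_eq_integral_inner_gradient (hφ : Differentiable ℝ φ)
    (hφ' : deriv φ 0 = 0) (hr : r ≠ 0) (u : V → F) (x : V) :
    smoothedRadialEnergy φ u x r =
      -r * ∫ y, ⟪fderiv ℝ u y (y - x), fderiv ℝ u y (∇ (radialCutoff φ x r) y)⟫ := by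
  rw [smoothedRadialEnergy, neg_mul, ← integral_const_mul]
  congr 2 with y
  rw [gradient_radialCutoff hφ hφ']
  simp only [map_smul, real_inner_smul_right, real_inner_self_eq_norm_sq, norm_smul, norm_inv,
    norm_norm]
  rcases eq_or_ne ‖y - x‖ 0 with h | h
  · simp [h]
  · field_simp

theorem hasDerivAt_smoothedEnergy (hφ : ContDiff ℝ 1 φ) (hφ' : deriv φ 0 = 0)
    (hφ0 : ∀ t, 1 ≤ t → φ t = 0) (hr : 0 < r)
    (hu : ∀ y ∈ closedBall x r, ContDiffAt ℝ 2 u y) :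
    HasDerivAt (smoothedEnergy φ u x)
      (-(1 / r) * ∫ y, gradNormSq u y * ⟪∇ (radialCutoff φ x r) y, y - x⟫) r := by
  obtain ⟨R, hrR, hR : ∀ y ∈ closedBall x R, ContDiffAt ℝ 2 u y⟩ :=
    exists_gt_closedBall_subset hr.le (isOpen_setOf_contDiffAt (n := 2) (by simp) u) hu
  have hint : IntegrableOn (gradNormSq u) (ball x R) := by
    refine (ContinuousOn.integrableOn_compact (isCompact_closedBall x R)
      fun y hy ↦ ?_).mono_set ball_subset_closedBall
    exact (contDiffAt_gradNormSq (hR y hy)).continuousAt.continuousWithinAt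
  have hderiv : HasDerivAt (smoothedEnergy φ u x) _ r :=
    hasDerivAt_integral_mul_radialCutoff hφ hφ0 hr hrR hint
  convert hderiv using 1
  rw [← integral_const_mul]
  congr 1 with y
  rw [gradient_radialCutoff (hφ.differentiable one_ne_zero) hφ', real_inner_smul_left,
    real_inner_smul_left, real_inner_self_eq_norm_sq]
  rcases eq_or_ne ‖y - x‖ 0 with h | h
  · simp [h]
  · field_simp

theorem stmt_8_general (hφ : ContDiff ℝ 1 φ) (hφ' : deriv φ 0 = 0) (hφ0 : ∀ t, 1 ≤ t → φ t = 0)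
    (hr : 0 < r) (hu : HarmonicOnNhd u (closedBall x r)) :
    HasDerivAt (smoothedEnergy φ u x)
      ((finrank ℝ V - 2) / r * smoothedEnergy φ u x r
        + 2 / r ^ 2 * smoothedRadialEnergy φ u x r) r := by
  have htsupp : tsupport (radialCutoff φ x r) ⊆ closedBall x r :=
    closure_minimal (Function.support_subset_iff'.2 fun y hy ↦
      radialCutoff_eq_zero hφ0 hr fun h ↦ hy (ball_subset_closedBall h)) isClosed_closedBall
  have hpoh := integral_pohozaev_identity (μ := volume) (contDiff_radialCutoff hφ hφ' x r)
    (HasCompactSupport.of_support_subset_isCompact (isCompact_closedBall x r)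
      ((subset_tsupport _).trans htsupp)) (hu.mono htsupp) x
  convert hasDerivAt_smoothedEnergy hφ hφ' hφ0 hr fun y hy ↦ (hu y hy).1 using 1
  rw [smoothedRadialEnergy_eq_integral_inner_gradient (hφ.differentiable one_ne_zero) hφ' hr.ne']
  rw [← smoothedEnergy] at hpoh
  field_simp
  linarith

end SmoothedEnergy

theorem IsHarmonicOn.harmonicOnNhd {u : E4 → F} {Ω : Set E4} (hu : IsHarmonicOn u Ω)
    (hΩ : IsOpen Ω) : HarmonicOnNhd u Ω := by
  refine fun y hy ↦ ⟨(hu.1.contDiffAt (hΩ.mem_nhds hy)).of_le (WithTop.coe_le_coe.2 le_top), ?_⟩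
  filter_upwards [hΩ.mem_nhds hy] with z hz
  simpa [laplacian_eq_iteratedFDeriv_orthonormalBasis u (EuclideanSpace.basisFun (Fin 4) ℝ)]
    using hu.2 z hz

theorem Dphi_eq_smoothedEnergy (φ : ℝ → ℝ) (u : E4 → F) (x : E4) :
    Dphi φ u x = smoothedEnergy φ u x := by
  unfold Dphi
  simp only [gradSq_eq_gradNormSq]
  rfl

theorem Ephi_eq_smoothedRadialEnergy (φ : ℝ → ℝ) (u : E4 → F) (x : E4) (r : ℝ) :
    Ephi φ u x r = smoothedRadialEnergy φ u x r :=
  rfl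

/-- Flat-case identity (4.2): `∂_r D_φ(x,r) = (2/r) D_φ(x,r) + (2/r²) E_φ(x,r)`. -/
theorem stmt_8 (φ : ℝ → ℝ) (hφs : ContDiff ℝ (⊤ : ℕ∞) φ) (hφa : Antitone φ)
    (hφ1 : ∀ t ≤ (3/4 : ℝ), φ t = 1) (hφ0 : ∀ t, (1:ℝ) ≤ t → φ t = 0)
    (Ω : Set E4) (hΩ : IsOpen Ω) (u : E4 → E) (hu : IsHarmonicOn u Ω)
    (x : E4) (r : ℝ) (hr : 0 < r)
    (hball : ∀ᶠ r' in nhds r, closedBall x r' ⊆ Ω) :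
    HasDerivAt (fun t => Dphi φ u x t)
      (2 / r * Dphi φ u x r + 2 / r ^ 2 * Ephi φ u x r) r := by
  have hφ' : deriv φ 0 = 0 :=
    deriv_eq_zero_of_eqOn_const (Iic_mem_nhds (by norm_num : (0 : ℝ) < 3 / 4)) hφ1
  have h := stmt_8_general (hφs.of_le (WithTop.coe_le_coe.2 le_top)) hφ' hφ0 hr
    ((hu.harmonicOnNhd hΩ).mono hball.self_of_nhds)
  rw [finrank_euclideanSpace_fin, show ((4 : ℕ) : ℝ) - 2 = 2 by norm_num] at h
  simpa only [Dphi_eq_smoothedEnergy, Ephi_eq_smoothedRadialEnergy] using h
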